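/- Let S be a finite state space with transition rates r(s,s') ≥ 0 for s ≠ s' (and r(s,s) = 0), let π be a stationary distribution, and let V : S → [0,∞). Define ν_max = max over pairs s,s' with r(s,s') > 0 of |V(s) − V(s')|, and f_max = max(0, max_{s∈S} ∑_{s' : V(s') > V(s)} r(s,s')·(V(s') − V(s))). Suppose there exist B > 0 and γ with 0 < γ ≤ f_max such that GV(s) ≤ −γ whenever V(s) ≥ B. Then for every positive integer j, π({s : V(s) ≥ B + 2 ν_max j}) ≤ exp(−j γ/(2 f_max)). -/

import Mathlib

open scoped Classical

theorem aux_stat {S : Type*} [Fintype S] (r : S → S → ℝ) (pr : S → ℝ)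
    (hbal : ∀ s, pr s * ∑ s', r s s' = ∑ s', pr s' * r s' s) (W : S → ℝ) :
    ∑ s, pr s * ∑ s', r s s' * (W s' - W s) = 0 := by
  have h1 : ∑ s, pr s * ∑ s', r s s' * (W s' - W s)
      = ∑ s, ∑ s', pr s * r s s' * W s' - ∑ s, (pr s * ∑ s', r s s') * W s := by
    rw [← Finset.sum_sub_distrib]
    refine Finset.sum_congr rfl fun s _ => ?_
    rw [Finset.mul_sum, Finset.mul_sum, Finset.sum_mul, ← Finset.sum_sub_distrib]
    refine Finset.sum_congr rfl fun s' _ => ?_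
    ring
  rw [h1, Finset.sum_comm, sub_eq_zero]
  refine Finset.sum_congr rfl fun s _ => ?_
  rw [hbal, Finset.sum_mul]

theorem aux_step {S : Type*} [Fintype S] (r : S → S → ℝ)
    (hr : ∀ s s', 0 ≤ r s s')
    (pr : S → ℝ) (hpr0 : ∀ s, 0 ≤ pr s)
    (hbal : ∀ s, pr s * ∑ s', r s s' = ∑ s', pr s' * r s' s)
    (V : S → ℝ) (ν f : ℝ) (hν0 : 0 ≤ ν)
    (hν : ∀ s s', 0 < r s s' → |V s - V s'| ≤ ν)
    (hf : ∀ s, ∑ s' ∈ Finset.univ.filter (fun s' => V s < V s'), r s s' * (V s' - V s) ≤ f)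
    (γ c : ℝ) (hdrift : ∀ s, c + ν ≤ V s → ∑ s', r s s' * (V s' - V s) ≤ -γ) :
    (f + γ) * ∑ s ∈ Finset.univ.filter (fun s => c + ν ≤ V s), pr s
      ≤ f * ∑ s ∈ Finset.univ.filter (fun s => c - ν ≤ V s), pr s := by
  have h0 := aux_stat r pr hbal (fun s => max (V s) c)
  have h1 : ∑ s, pr s * ∑ s', r s s' * (max (V s') c - max (V s) c)
      ≤ ∑ s, (f * (if c - ν ≤ V s then pr s else 0)
        - (f + γ) * (if c + ν ≤ V s then pr s else 0)) := by
    refine Finset.sum_le_sum fun s _ => ?_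
    by_cases ha : c + ν ≤ V s
    · have hb : c - ν ≤ V s := by linarith
      have : ∑ s', r s s' * (max (V s') c - max (V s) c) = ∑ s', r s s' * (V s' - V s) := by
        refine Finset.sum_congr rfl fun s' _ => ?_
        rcases (hr s s').eq_or_lt with h | h
        · simp [← h]
        · have := abs_le.1 (hν s s' h)
          rw [max_eq_left (by linarith), max_eq_left (by linarith)]
      rw [this, if_pos ha, if_pos hb]
      have := mul_le_mul_of_nonneg_left (hdrift s ha) (hpr0 s)
      linarith
    · by_cases hb : c - ν ≤ V s
      · rw [if_neg ha, if_pos hb]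
        have : ∑ s', r s s' * (max (V s') c - max (V s) c) ≤ f := by
          refine le_trans ?_ (hf s)
          rw [Finset.sum_filter]
          refine Finset.sum_le_sum fun s' _ => ?_
          split_ifs with h
          · refine mul_le_mul_of_nonneg_left ?_ (hr s s')
            rcases max_cases (V s') c with h1 | h1 <;> rcases max_cases (V s) c with h2 | h2 <;>
              linarith
          · refine mul_nonpos_of_nonneg_of_nonpos (hr s s') ?_
            have := max_le_max_right c (not_lt.1 h)
            linarith
        have := mul_le_mul_of_nonneg_left this (hpr0 s)
        linarith
      · have : ∑ s', r s s' * (max (V s') c - max (V s) c) = 0 := by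
          refine Finset.sum_eq_zero fun s' _ => ?_
          rcases (hr s s').eq_or_lt with h | h
          · simp [← h]
          · have := abs_le.1 (hν s s' h)
            rw [max_eq_right (by linarith), max_eq_right (by linarith)]
            ring
        rw [this, if_neg ha, if_neg hb]
        simp
  rw [Finset.sum_sub_distrib, ← Finset.mul_sum, ← Finset.mul_sum, ← Finset.sum_filter,
    ← Finset.sum_filter] at h1
  linarith

/-- The exponential-form tail bound (used in the proof of Lemma 5.5): if the Lyapunov
function `V` has drift at most `-γ` whenever `V ≥ B`, with `0 < γ ≤ fmax`, then the
stationary probability that `V ≥ B + 2 νmax j` is at most `exp(-jγ/(2 fmax))`. -/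
theorem stmt_4 {S : Type*} [Fintype S] (r : S → S → ℝ)
    (hr : ∀ s s', s ≠ s' → 0 ≤ r s s') (hdiag : ∀ s, r s s = 0)
    (pr : S → ℝ) (hpr0 : ∀ s, 0 ≤ pr s) (hpr1 : ∑ s, pr s = 1)
    (hbal : ∀ s, pr s * ∑ s', r s s' = ∑ s', pr s' * r s' s)
    (V : S → ℝ) (hV : ∀ s, 0 ≤ V s)
    (νmax fmax : ℝ)
    (hν : νmax = sSup ((fun p : S × S => |V p.1 - V p.2|) '' {p | 0 < r p.1 p.2}))
    (hf : fmax = max 0 (⨆ s : S, ∑ s' ∈ Finset.univ.filter (fun s' => V s < V s'),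
        r s s' * (V s' - V s)))
    (B γ : ℝ) (hB : 0 < B) (hγ : 0 < γ) (hγf : γ ≤ fmax)
    (hdrift : ∀ s, B ≤ V s → ∑ s', r s s' * (V s' - V s) ≤ -γ)
    (j : ℕ) (hj : 1 ≤ j) :
    ∑ s ∈ Finset.univ.filter (fun s => B + 2 * νmax * j ≤ V s), pr s
      ≤ Real.exp (-(j * γ) / (2 * fmax)) := by
  have hr' : ∀ s s', 0 ≤ r s s' := by
    intro s s'
    by_cases h : s = s'
    · subst h; exact (hdiag s).ge
    · exact hr s s' h
  have hν0 : 0 ≤ νmax := by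
    rw [hν]
    apply Real.sSup_nonneg
    rintro _ ⟨p, _, rfl⟩
    exact abs_nonneg _
  have hν1 : ∀ s s', 0 < r s s' → |V s - V s'| ≤ νmax := by
    intro s s' h
    rw [hν]
    exact le_csSup (Set.toFinite _).bddAbove ⟨(s, s'), h, rfl⟩
  have hf1 : ∀ s, ∑ s' ∈ Finset.univ.filter (fun s' => V s < V s'), r s s' * (V s' - V s)
      ≤ fmax := by
    intro s
    rw [hf]
    refine le_trans ?_ (le_max_right _ _)
    exact le_ciSup (f := fun s => ∑ s' ∈ Finset.univ.filter (fun s' => V s < V s'),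
      r s s' * (V s' - V s)) (Set.finite_range _).bddAbove s
  have hf0 : 0 < fmax := lt_of_lt_of_le hγ hγf
  have hρ : fmax ≤ (fmax + γ) * Real.exp (-γ / (2 * fmax)) := by
    have h1 := Real.add_one_le_exp (-γ / (2 * fmax))
    have h2 : fmax ≤ (fmax + γ) * (-γ / (2 * fmax) + 1) := by
      have : (fmax + γ) * (-γ / (2 * fmax) + 1) - fmax = γ * (fmax - γ) / (2 * fmax) := by
        field_simp
        ring
      have h3 : 0 ≤ γ * (fmax - γ) / (2 * fmax) :=
        div_nonneg (mul_nonneg hγ.le (by linarith)) (by linarith)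
      linarith
    exact h2.trans (mul_le_mul_of_nonneg_left h1 (by linarith))
  clear hj
  induction j with
  | zero =>
    simp only [Nat.cast_zero, mul_zero, zero_mul, neg_zero, zero_div, Real.exp_zero]
    rw [← hpr1]
    exact Finset.sum_le_sum_of_subset_of_nonneg (Finset.filter_subset _ _) fun s _ _ => hpr0 s
  | succ k ih =>
    have hk : 0 ≤ νmax * k := by positivity
    have key := aux_step r hr' pr hpr0 hbal V νmax fmax hν0 hν1 hf1 γ (B + 2 * νmax * k + νmax)
      (fun s hs => hdrift s (by linarith))
    have e1 : B + 2 * νmax * k + νmax + νmax = B + 2 * νmax * ((k + 1 : ℕ) : ℝ) := by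
      push_cast; ring
    have e2 : B + 2 * νmax * k + νmax - νmax = B + 2 * νmax * k := by ring
    rw [e1, e2] at key
    have e3 : Real.exp (-(((k + 1 : ℕ) : ℝ) * γ) / (2 * fmax))
        = Real.exp (-γ / (2 * fmax)) * Real.exp (-(k * γ) / (2 * fmax)) := by
      rw [← Real.exp_add]
      congr 1
      push_cast
      ring
    rw [e3]
    have h4 := mul_le_mul_of_nonneg_left ih hf0.le
    have h5 := mul_le_mul_of_nonneg_right hρ (Real.exp_pos (-(k * γ) / (2 * fmax))).le
    refine le_of_mul_le_mul_left ?_ (show 0 < fmax + γ by linarith)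
    linarith
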